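/- arXiv:1511.07902 — 2 statements merged into one kernel-verified Lean document; each statement's English description precedes it below -/
import Mathlib

section
/- Let μ > 0, τ² ≥ 0, α ∈ (0, 1), L ≥ 1, and let a(1), …, a(L) and b(0), b(1), …, b(L) be nonnegative real numbers satisfying 2μ a(i) ≤ α b(i−1) − b(i) + μ²τ² for every i = 1, …, L. Then the smallest increment satisfies 2μ · min_{1 ≤ i ≤ L} a(i) ≤ μ²τ² + b(0) · α^L (1 − α)/(1 − α^L). -/
/-!
If `u` is a lower bound for the quantities `2 * μ * a i`, the recursion gives
`b (k + 1) ≤ α * b k + (s - u)` with `s = μ ^ 2 * τ2`, so `b` stays below the arithmetic-geometric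
sequence with ratio `α` and increment `s - u`. At time `L` this reads
`0 ≤ b L ≤ α ^ L * b 0 + (s - u) * ∑ i < L, α ^ i`; solving for `u` bounds it by
`s + b 0 * (α ^ L / ∑ i < L, α ^ i)`, and the minimum is the best choice of `u`.
-/

theorem le_arithGeom_of_le_mul_add {R : Type*} [Semiring R] [PartialOrder R] [IsOrderedRing R]
    {α c : R} {b : ℕ → R} {n : ℕ} (hα : 0 ≤ α) (h : ∀ k < n, b (k + 1) ≤ α * b k + c) :
    b n ≤ arithGeom α c (b 0) n := by
  have hmono : Monotone fun x ↦ α * x + c := (monotone_mul_left_of_nonneg hα).add_const c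
  exact hmono.seq_le_seq n le_rfl h fun k _ ↦ (arithGeom_succ k).ge

section LinearOrderedField

variable {𝕜 : Type*} [Field 𝕜] [LinearOrder 𝕜] [IsStrictOrderedRing 𝕜]

theorem le_add_mul_pow_div_geom_sum {α s u : 𝕜} {b : ℕ → 𝕜} {n : ℕ} (hα : 0 ≤ α) (hn : n ≠ 0)
    (hbn : 0 ≤ b n) (h : ∀ k < n, u ≤ α * b k - b (k + 1) + s) :
    u ≤ s + b 0 * (α ^ n / ∑ i ∈ Finset.range n, α ^ i) := by
  have hnonneg : 0 ≤ α ^ n * b 0 + (s - u) * ∑ i ∈ Finset.range n, α ^ i :=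
    calc
      0 ≤ b n := hbn
      _ ≤ arithGeom α (s - u) (b 0) n :=
        le_arithGeom_of_le_mul_add hα fun k hk ↦ by linarith [h k hk]
      _ = _ := arithGeom_eq_add_sum n
  have hdiff : u - s ≤ b 0 * α ^ n / ∑ i ∈ Finset.range n, α ^ i := by
    rw [le_div_iff₀ (geom_sum_pos hα hn)]
    linarith
  rw [← mul_div_assoc]
  exact sub_le_iff_le_add'.mp hdiff

theorem best_pocket_sequence_lemma_general {μ τ2 α : 𝕜} (hμ : 0 ≤ μ) (hα : 0 ≤ α)
    {L : ℕ} (hL : 1 ≤ L) {a b : ℕ → 𝕜} (hbL : 0 ≤ b L)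
    (hrec : ∀ i, 1 ≤ i → i ≤ L → 2 * μ * a i ≤ α * b (i - 1) - b i + μ ^ 2 * τ2) :
    2 * μ * ((Finset.Icc 1 L).inf' (Finset.nonempty_Icc.mpr hL) a) ≤
      μ ^ 2 * τ2 + b 0 * (α ^ L / ∑ i ∈ Finset.range L, α ^ i) := by
  refine le_add_mul_pow_div_geom_sum hα (Nat.one_le_iff_ne_zero.mp hL) hbL fun k hk ↦ ?_
  have hmin : (Finset.Icc 1 L).inf' (Finset.nonempty_Icc.mpr hL) a ≤ a (k + 1) :=
    Finset.inf'_le a (Finset.mem_Icc.mpr ⟨k.succ_pos, hk⟩)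
  calc
    2 * μ * (Finset.Icc 1 L).inf' (Finset.nonempty_Icc.mpr hL) a
    _ ≤ 2 * μ * a (k + 1) := by gcongr
    _ ≤ α * b k - b (k + 1) + μ ^ 2 * τ2 := hrec (k + 1) k.succ_pos hk

end LinearOrderedField

/-- **Best-pocket sequence lemma.**
If nonnegative sequences `a`, `b` satisfy `2μ a(i) ≤ α b(i−1) − b(i) + μ²τ²` for
`i = 1, …, L`, with `α ∈ (0,1)`, then
`2μ · min_{1 ≤ i ≤ L} a(i) ≤ μ²τ² + b(0) α^L (1−α)/(1−α^L)`. -/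
theorem best_pocket_sequence_lemma
    (μ τ2 α : ℝ) (hμ : 0 < μ) (hτ2 : 0 ≤ τ2) (hα0 : 0 < α) (hα1 : α < 1)
    (L : ℕ) (hL : 1 ≤ L) (a b : ℕ → ℝ)
    (ha : ∀ i, 1 ≤ i → i ≤ L → 0 ≤ a i)
    (hb : ∀ i, i ≤ L → 0 ≤ b i)
    (hrec : ∀ i, 1 ≤ i → i ≤ L → 2 * μ * a i ≤ α * b (i - 1) - b i + μ ^ 2 * τ2) :
    2 * μ * ((Finset.Icc 1 L).inf' (Finset.nonempty_Icc.mpr hL) a) ≤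
      μ ^ 2 * τ2 + b 0 * (α ^ L * (1 - α) / (1 - α ^ L)) := by
  rw [← div_div_eq_mul_div, ← neg_div_neg_eq (1 - α ^ L), neg_sub, neg_sub, ← geom_sum_eq hα1.ne]
  exact best_pocket_sequence_lemma_general hμ.le hα0.le hL (hb L le_rfl) hrec
end

section
/- Let μ > 0, τ² ≥ 0, α ∈ (0, 1), L ≥ 1, and let a(1), …, a(L) and b(0), b(1), …, b(L) be nonnegative real numbers satisfying 2μ a(i) ≤ α b(i−1) − b(i) + μ²τ² for every i = 1, …, L. Then for any κ with α ≤ κ < 1 it holds that Σ_{i=1}^{L} κ^{L−i} (2μ a(i) − μ²τ²) ≤ κ^L b(0); equivalently, the κ-exponentially-weighted average satisfies 2μ Σ_{i=1}^{L} r(i) a(i) ≤ κ^L (1 − κ)/(1 − κ^L) · b(0) + μ²τ², where r(i) = κ^{L−i} / Σ_{j=1}^{L} κ^{L−j}. -/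
/-!
Since `b ≥ 0`, the recursion survives relaxing the contraction factor from `α` to `κ`. Weighting
the `i`-th inequality by `κ ^ (L - i)` makes the differences `κ * b (i - 1) - b i` telescope, and
dividing by the geometric sum of the weights gives the bound on the average.
-/

open Finset

section Telescoping

variable {R : Type*} [Ring R]

theorem sum_Icc_pow_sub_mul_telescope (κ : R) (b : ℕ → R) (n : ℕ) :
    ∑ i ∈ Icc 1 n, κ ^ (n - i) * (κ * b (i - 1) - b i) = κ ^ n * b 0 - b n := by
  induction n with
  | zero => simp
  | succ n ih =>
    have shift : ∀ i ∈ Icc 1 n, κ ^ (n + 1 - i) * (κ * b (i - 1) - b i) =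
        κ * (κ ^ (n - i) * (κ * b (i - 1) - b i)) := fun i hi => by
      rw [Nat.sub_add_comm (mem_Icc.mp hi).2, pow_succ', mul_assoc]
    rw [sum_Icc_succ_top n.succ_pos, sum_congr rfl shift, ← mul_sum, ih]
    simp [pow_succ', mul_assoc, mul_sub]

theorem sum_Icc_pow_sub_mul_le [PartialOrder R] [IsOrderedRing R] {α κ : R} {b c : ℕ → R} {n : ℕ}
    (hκ : 0 ≤ κ) (hακ : α ≤ κ) (hb : ∀ i < n, 0 ≤ b i)
    (hc : ∀ i ∈ Icc 1 n, c i ≤ α * b (i - 1) - b i) :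
    ∑ i ∈ Icc 1 n, κ ^ (n - i) * c i ≤ κ ^ n * b 0 - b n := by
  rw [← sum_Icc_pow_sub_mul_telescope]
  refine sum_le_sum fun i hi => mul_le_mul_of_nonneg_left ?_ (pow_nonneg hκ _)
  have hbi : 0 ≤ b (i - 1) := hb _ (by grind)
  calc c i ≤ α * b (i - 1) - b i := hc i hi
    _ ≤ κ * b (i - 1) - b i := by gcongr

end Telescoping

theorem sum_Icc_one_reflect {M : Type*} [AddCommMonoid M] (f : ℕ → M) (n : ℕ) :
    ∑ i ∈ Icc 1 n, f (n - i) = ∑ i ∈ range n, f i := by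
  rw [← Ico_add_one_right_eq_Icc, sum_Ico_reflect f 1 le_rfl, range_eq_Ico, Nat.sub_self,
    Nat.add_sub_cancel]

section Average

variable {K : Type*} [Field K]

theorem sum_div_sum_mul_eq_add {ι : Type*} {s : Finset ι} {w : ι → K} (hw : ∑ j ∈ s, w j ≠ 0)
    (x : ι → K) (d : K) :
    ∑ i ∈ s, w i / (∑ j ∈ s, w j) * x i = (∑ i ∈ s, w i * (x i - d)) / (∑ j ∈ s, w j) + d := by
  simp only [div_mul_eq_mul_div, ← sum_div, mul_sub, sum_sub_distrib, ← sum_mul]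
  field_simp
  ring

variable [LinearOrder K] [IsStrictOrderedRing K]

theorem sum_pow_sub_div_sum_mul_le {κ d M : K} {x : ℕ → K} {n : ℕ} (hn : n ≠ 0)
    (hκ0 : 0 ≤ κ) (hκ1 : κ ≠ 1) (hM : ∑ i ∈ Icc 1 n, κ ^ (n - i) * (x i - d) ≤ M) :
    ∑ i ∈ Icc 1 n, κ ^ (n - i) / (∑ j ∈ Icc 1 n, κ ^ (n - j)) * x i ≤
      M * (1 - κ) / (1 - κ ^ n) + d := by
  have weights_eq_geom_sum := sum_Icc_one_reflect (κ ^ ·) n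
  have weights_pos : 0 < ∑ j ∈ Icc 1 n, κ ^ (n - j) :=
    weights_eq_geom_sum ▸ geom_sum_pos hκ0 hn
  have weights_eq : ∑ j ∈ Icc 1 n, κ ^ (n - j) = (1 - κ ^ n) / (1 - κ) := by
    rw [weights_eq_geom_sum, geom_sum_eq hκ1, ← neg_div_neg_eq, neg_sub, neg_sub]
  calc ∑ i ∈ Icc 1 n, κ ^ (n - i) / (∑ j ∈ Icc 1 n, κ ^ (n - j)) * x i
      = (∑ i ∈ Icc 1 n, κ ^ (n - i) * (x i - d)) / (∑ j ∈ Icc 1 n, κ ^ (n - j)) + d :=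
        sum_div_sum_mul_eq_add weights_pos.ne' x d
    _ ≤ M / (∑ j ∈ Icc 1 n, κ ^ (n - j)) + d := by gcongr
    _ = M * (1 - κ) / (1 - κ ^ n) + d := by rw [weights_eq, div_div_eq_mul_div]

theorem relaxed_exponential_smoothing_sequence_lemma_general {μ τ2 α κ : K} {L : ℕ} (hL : 1 ≤ L)
    {a b : ℕ → K} (hb : ∀ i, i ≤ L → 0 ≤ b i)
    (hrec : ∀ i, 1 ≤ i → i ≤ L → 2 * μ * a i ≤ α * b (i - 1) - b i + μ ^ 2 * τ2)
    (hκ0 : 0 ≤ κ) (hακ : α ≤ κ) (hκ1 : κ ≠ 1) :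
    (∑ i ∈ Icc 1 L, κ ^ (L - i) * (2 * μ * a i - μ ^ 2 * τ2) ≤ κ ^ L * b 0) ∧
    (2 * μ * ∑ i ∈ Icc 1 L, (κ ^ (L - i) / ∑ j ∈ Icc 1 L, κ ^ (L - j)) * a i ≤
      κ ^ L * (1 - κ) / (1 - κ ^ L) * b 0 + μ ^ 2 * τ2) := by
  have hdiff : ∀ i ∈ Icc 1 L, 2 * μ * a i - μ ^ 2 * τ2 ≤ α * b (i - 1) - b i := fun i hi =>
    sub_le_iff_le_add.mpr <| hrec i (mem_Icc.mp hi).1 (mem_Icc.mp hi).2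
  have weighted_sum_le :
      ∑ i ∈ Icc 1 L, κ ^ (L - i) * (2 * μ * a i - μ ^ 2 * τ2) ≤ κ ^ L * b 0 :=
    (sum_Icc_pow_sub_mul_le hκ0 hακ (fun i hi => hb i hi.le) hdiff).trans
      (sub_le_self _ (hb L le_rfl))
  refine ⟨weighted_sum_le, ?_⟩
  calc 2 * μ * ∑ i ∈ Icc 1 L, (κ ^ (L - i) / ∑ j ∈ Icc 1 L, κ ^ (L - j)) * a i
      = ∑ i ∈ Icc 1 L, (κ ^ (L - i) / ∑ j ∈ Icc 1 L, κ ^ (L - j)) * (2 * μ * a i) := by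
        simp only [mul_sum, mul_left_comm]
    _ ≤ κ ^ L * b 0 * (1 - κ) / (1 - κ ^ L) + μ ^ 2 * τ2 :=
        sum_pow_sub_div_sum_mul_le (Nat.one_le_iff_ne_zero.mp hL) hκ0 hκ1 weighted_sum_le
    _ = κ ^ L * (1 - κ) / (1 - κ ^ L) * b 0 + μ ^ 2 * τ2 := by ring

end Average

/-- **Relaxed exponential-smoothing sequence lemma.**
If nonnegative sequences `a`, `b` satisfy `2μ a(i) ≤ α b(i−1) − b(i) + μ²τ²` for
`i = 1, …, L`, with `α ∈ (0,1)`, then for any `κ` with `α ≤ κ < 1`: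
`Σ_{i=1}^{L} κ^{L−i}(2μ a(i) − μ²τ²) ≤ κ^L b(0)`, and the `κ`-exponentially weighted
average satisfies `2μ Σ r(i) a(i) ≤ κ^L (1−κ)/(1−κ^L) b(0) + μ²τ²` where
`r(i) = κ^{L−i}/Σ_{j=1}^{L} κ^{L−j}`. -/
theorem relaxed_exponential_smoothing_sequence_lemma
    (μ τ2 α : ℝ) (hμ : 0 < μ) (hτ2 : 0 ≤ τ2) (hα0 : 0 < α) (hα1 : α < 1)
    (L : ℕ) (hL : 1 ≤ L) (a b : ℕ → ℝ)
    (ha : ∀ i, 1 ≤ i → i ≤ L → 0 ≤ a i)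
    (hb : ∀ i, i ≤ L → 0 ≤ b i)
    (hrec : ∀ i, 1 ≤ i → i ≤ L → 2 * μ * a i ≤ α * b (i - 1) - b i + μ ^ 2 * τ2)
    (κ : ℝ) (hκ0 : α ≤ κ) (hκ1 : κ < 1) :
    (∑ i ∈ Finset.Icc 1 L, κ ^ (L - i) * (2 * μ * a i - μ ^ 2 * τ2) ≤ κ ^ L * b 0) ∧
    (2 * μ * ∑ i ∈ Finset.Icc 1 L,
        (κ ^ (L - i) / ∑ j ∈ Finset.Icc 1 L, κ ^ (L - j)) * a i ≤
      κ ^ L * (1 - κ) / (1 - κ ^ L) * b 0 + μ ^ 2 * τ2) :=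
  relaxed_exponential_smoothing_sequence_lemma_general hL hb hrec (hα0.le.trans hκ0) hκ0 hκ1.ne
end
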